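/- Let ψ = (a₁,a₂,a₃,b₁,b₂,b₃) be a real vector such that the matrix V = 𝒱(ψ) satisfies V_{ij} > 0 whenever i ∉ {j−1, j} (indices mod 7). Then V has nonnegative rank strictly less than 7; that is, there exist a 7×6 matrix B and a 6×7 matrix C, both with all entries nonnegative, such that V = B·C. -/

import Mathlib

/-- The rows of the 7-by-3 matrix `W(a₁,a₂,a₃,b₁,b₂,b₃)`, indexed by `ZMod 7`
(index `k` representing the `k`-th row, with `7 ≡ 0`): `Wrow ... k` is the
`k`-th column of the 3-by-7 matrix with rows `(0,0,1,1,a₁,a₂,a₃)`,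
`(1,0,0,1,1,1,1)`, `(1,1,0,0,b₁,b₂,b₃)`. -/
noncomputable def Wrow (a₁ a₂ a₃ b₁ b₂ b₃ : ℝ) (k : ZMod 7) : Fin 3 → ℝ :=
  fun r =>
    (Matrix.of ![![(0 : ℝ), 0, 1, 1, a₁, a₂, a₃],
                 ![1, 0, 0, 1, 1, 1, 1],
                 ![1, 1, 0, 0, b₁, b₂, b₃]]) r ⟨(k - 1).val, ZMod.val_lt _⟩

/-- The 7-by-7 matrix `𝒱(a₁,a₂,a₃,b₁,b₂,b₃)`, indexed by `ZMod 7`: its `(i,j)` entry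
is the determinant of the 3-by-3 matrix with rows `W_{i-1}`, `W_{j-2}`, `W_{j-1}`. -/
noncomputable def Vmat (a₁ a₂ a₃ b₁ b₂ b₃ : ℝ) : Matrix (ZMod 7) (ZMod 7) ℝ :=
  Matrix.of fun i j =>
    Matrix.det (Matrix.of ![Wrow a₁ a₂ a₃ b₁ b₂ b₃ (i - 1),
                            Wrow a₁ a₂ a₃ b₁ b₂ b₃ (j - 2),
                            Wrow a₁ a₂ a₃ b₁ b₂ b₃ (j - 1)])

/-- The bracket (determinant) of three vectors. -/
def Dbr (x y z : Fin 3 → ℝ) : ℝ :=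
  x 0 * y 1 * z 2 - x 0 * y 2 * z 1 - x 1 * y 0 * z 2 + x 1 * y 2 * z 0
    + x 2 * y 0 * z 1 - x 2 * y 1 * z 0

lemma Dbr_cyc (x y z : Fin 3 → ℝ) : Dbr x y z = Dbr y z x := by
  unfold Dbr; ring

/-- Three-term Pluecker relation. -/
lemma Dbr_pl (a b c d e : Fin 3 → ℝ) :
    Dbr a b d * Dbr a c e = Dbr a b c * Dbr a d e + Dbr a b e * Dbr a c d := by
  unfold Dbr; ring

lemma Dbr_dep (a b c d x y : Fin 3 → ℝ) :
    Dbr b c d * Dbr a x y - Dbr a c d * Dbr b x y + Dbr a b d * Dbr c x y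
      - Dbr a b c * Dbr d x y = 0 := by
  unfold Dbr; ring

/-- The points form a convex heptagon. -/
def Cvx (v : Fin 7 → Fin 3 → ℝ) : Prop :=
  ∀ k l : Fin 7, k ≠ l → k ≠ l + 1 → 0 < Dbr (v k) (v l) (v (l + 1))

def shv (v : Fin 7 → Fin 3 → ℝ) (r : Fin 7) : Fin 7 → Fin 3 → ℝ := fun k => v (k + r)

lemma Cvx.shv {v : Fin 7 → Fin 3 → ℝ} (h : Cvx v) (r : Fin 7) : Cvx (shv v r) := by
  intro k l h1 h2
  have := h (k + r) (l + r) (by simpa using h1)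
    (by rw [add_right_comm]; simpa using h2)
  rw [add_right_comm] at this
  exact this

/-- First kind of failure. -/
def RF (v : Fin 7 → Fin 3 → ℝ) : Prop :=
  Dbr (v 0) (v 1) (v 2) * Dbr (v 3) (v 5) (v 6) < Dbr (v 0) (v 5) (v 6) * Dbr (v 1) (v 2) (v 3)

/-- Second kind of failure. -/
def LF (v : Fin 7 → Fin 3 → ℝ) : Prop :=
  Dbr (v 0) (v 5) (v 6) * Dbr (v 4) (v 1) (v 2) < Dbr (v 0) (v 1) (v 2) * Dbr (v 4) (v 5) (v 6)

/-- Cross-ratio comparison `[a b d][a c e] > [a b c][a d e]`. -/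
lemma Dbr_lt {a b c d e : Fin 3 → ℝ} (h1 : 0 < Dbr a b e) (h2 : 0 < Dbr a c d) :
    Dbr a b c * Dbr a d e < Dbr a b d * Dbr a c e := by
  have := Dbr_pl a b c d e
  have := mul_pos h1 h2
  linarith

lemma Cvx.skip {v : Fin 7 → Fin 3 → ℝ} (h : Cvx v) : 0 < Dbr (v 1) (v 3) (v 5) := by
  have h24 : 0 < Dbr (v 1) (v 2) (v 4) := by rw [← Dbr_cyc]; exact h 4 1 (by decide) (by decide)
  have h23 : 0 < Dbr (v 1) (v 2) (v 3) := h 1 2 (by decide) (by decide)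
  have h45 : 0 < Dbr (v 1) (v 4) (v 5) := h 1 4 (by decide) (by decide)
  have h25 : 0 < Dbr (v 1) (v 2) (v 5) := by rw [← Dbr_cyc]; exact h 5 1 (by decide) (by decide)
  have h34 : 0 < Dbr (v 1) (v 3) (v 4) := h 1 3 (by decide) (by decide)
  have := Dbr_pl (v 1) (v 2) (v 3) (v 4) (v 5)
  have h' : 0 < Dbr (v 1) (v 2) (v 4) * Dbr (v 1) (v 3) (v 5) := by rw [this]; positivity
  exact (pos_iff_pos_of_mul_pos h').1 h24

/-- Transitivity of ratio comparisons. -/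
lemma ratio_trans {a b c d e f : ℝ} (hb : 0 < b) (hd : 0 < d) (hf : 0 < f)
    (h1 : c * b < a * d) (h2 : e * d < c * f) : e * b < a * f := by
  have h3 : e * d * b < c * f * b := mul_lt_mul_of_pos_right h2 hb
  have h4 : c * b * f < a * d * f := mul_lt_mul_of_pos_right h1 hf
  have h5 : d * (e * b) < d * (a * f) := by nlinarith
  exact lt_of_mul_lt_mul_left h5 hd.le

lemma no_RL {v : Fin 7 → Fin 3 → ℝ} (h : Cvx v) (hR : RF v) : ¬ LF (shv v 3) := by
  intro hL
  have hL' : Dbr (v 3) (v 1) (v 2) * Dbr (v 0) (v 4) (v 5)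
      < Dbr (v 3) (v 4) (v 5) * Dbr (v 0) (v 1) (v 2) := hL
  unfold RF at hR
  rw [Dbr_cyc (v 3) (v 1) (v 2)] at hL'
  have p012 := h 0 1 (by decide) (by decide)
  have p123 := h 1 2 (by decide) (by decide)
  have p456 := h 4 5 (by decide) (by decide)
  have p356 := h 3 5 (by decide) (by decide)
  have p056 := h 0 5 (by decide) (by decide)
  have p045 := h 0 4 (by decide) (by decide)
  have p345 := h 3 4 (by decide) (by decide)
  have p035 : 0 < Dbr (v 5) (v 0) (v 3) := by
    have := (h.shv 2).skip
    have h' : 0 < Dbr (v 3) (v 5) (v 0) := this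
    rwa [Dbr_cyc] at h'
  simp only [Fin.isValue, Fin.reduceAdd] at p012 p123 p456 p356 p056 p045 p345
  have key := Dbr_lt (a := v 5) (b := v 6) (c := v 0) (d := v 3) (e := v 4)
    (by rw [← Dbr_cyc]; exact p456) p035
  rw [← Dbr_cyc (v 0) (v 5) (v 6), Dbr_cyc (v 5) (v 3) (v 4), ← Dbr_cyc (v 3) (v 5) (v 6),
    Dbr_cyc (v 5) (v 0) (v 4)] at key
  have := mul_lt_mul'' hR hL' (by positivity) (by positivity)
  have hp : 0 < Dbr (v 0) (v 1) (v 2) * Dbr (v 1) (v 2) (v 3) := by positivity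
  nlinarith [mul_lt_mul_of_pos_left key hp]

/-- Slope comparison: `[345][016] < [015][346]`. -/
lemma hept_slope {v : Fin 7 → Fin 3 → ℝ} (h : Cvx v) :
    Dbr (v 3) (v 4) (v 5) * Dbr (v 6) (v 0) (v 1)
      < Dbr (v 5) (v 0) (v 1) * Dbr (v 6) (v 3) (v 4) := by
  have p136 : 0 < Dbr (v 6) (v 1) (v 3) := (h.shv 5).skip
  have p135 := h.skip
  have p601 := h 6 0 (by decide) (by decide)
  have p634 := h 6 3 (by decide) (by decide)
  have p156 := h 1 5 (by decide) (by decide)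
  have p301 := h 3 0 (by decide) (by decide)
  have p356 := h 3 5 (by decide) (by decide)
  have p134 := h 1 3 (by decide) (by decide)
  simp only [Fin.isValue, Fin.reduceAdd] at p601 p634 p156 p301 p356 p134
  have k1 := Dbr_lt (a := v 1) (b := v 3) (c := v 5) (d := v 6) (e := v 0)
    (by rw [Dbr_cyc]; exact p301) p156
  have k2 := Dbr_lt (a := v 3) (b := v 4) (c := v 5) (d := v 6) (e := v 1)
    (by rw [← Dbr_cyc]; exact p134) p356
  rw [← Dbr_cyc (v 6) (v 3) (v 4), ← Dbr_cyc (v 1) (v 3) (v 5)] at k2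
  rw [← Dbr_cyc (v 6) (v 1) (v 3), Dbr_cyc (v 1) (v 6) (v 0), Dbr_cyc (v 1) (v 5) (v 0)] at k1
  rw [Dbr_cyc (v 3) (v 6) (v 1)] at k2
  exact ratio_trans (c := Dbr (v 1) (v 3) (v 5)) (d := Dbr (v 6) (v 1) (v 3)) p601 p136 p634
    (by linarith) (by linarith)

/-- Combining three failures around the heptagon gives a contradiction. -/
lemma chain_contra {a b c d e f g w x y : ℝ} (ha : 0 < a) (hb : 0 < b) (hc : 0 < c)
    (hd : 0 < d) (he : 0 < e) (hf : 0 < f) (hw : 0 < w)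
    (h0 : a * b < c * d) (h1 : d * e < f * g) (h2 : g * w < a * x)
    (k1 : x * f < w * y) (k2 : c * y < b * e) : False := by
  have m1 := mul_lt_mul'' h0 h1 (by positivity) (by positivity)
  have m2 : a * b * e < c * f * g := by
    have : d * (a * b * e) < d * (c * f * g) := by linarith
    exact lt_of_mul_lt_mul_left this hd.le
  have m3 := mul_lt_mul_of_pos_right m2 hw
  have m4 := mul_lt_mul_of_pos_left h2 (mul_pos hc hf)
  have m5 : b * e * w < c * f * x := by
    have : a * (b * e * w) < a * (c * f * x) := by linarith
    exact lt_of_mul_lt_mul_left this ha.le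
  have m6 := mul_lt_mul_of_pos_right k2 hw
  have m7 := mul_lt_mul_of_pos_left k1 hc
  linarith

lemma no_RRR {v : Fin 7 → Fin 3 → ℝ} (h : Cvx v) (h0 : RF v) (h1 : RF (shv v 1))
    (h2 : RF (shv v 2)) : False := by
  have h1' : Dbr (v 1) (v 2) (v 3) * Dbr (v 4) (v 6) (v 0)
      < Dbr (v 1) (v 6) (v 0) * Dbr (v 2) (v 3) (v 4) := h1
  have h2' : Dbr (v 2) (v 3) (v 4) * Dbr (v 5) (v 0) (v 1)
      < Dbr (v 2) (v 0) (v 1) * Dbr (v 3) (v 4) (v 5) := h2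
  unfold RF at h0
  have p012 := h 0 1 (by decide) (by decide)
  have p356 := h 3 5 (by decide) (by decide)
  have p056 := h 0 5 (by decide) (by decide)
  have p123 := h 1 2 (by decide) (by decide)
  have p460 := h 4 6 (by decide) (by decide)
  have p160 := h 1 6 (by decide) (by decide)
  have p234 := h 2 3 (by decide) (by decide)
  have p501 := h 5 0 (by decide) (by decide)
  have p345 := h 3 4 (by decide) (by decide)
  have p634 := h 6 3 (by decide) (by decide)
  have p456 := h 4 5 (by decide) (by decide)
  simp only [Fin.isValue, Fin.reduceAdd] at p012 p356 p056 p123 p460 p160 p234 p501 p345 p634 p456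
  have p603 : 0 < Dbr (v 6) (v 0) (v 3) := by rw [Dbr_cyc, Dbr_cyc]; exact h 3 6 (by decide) (by decide)
  have k1 := hept_slope h
  have k2 := Dbr_pl (v 6) (v 0) (v 3) (v 4) (v 5)
  have k3 : 0 < Dbr (v 6) (v 0) (v 3) * Dbr (v 6) (v 4) (v 5) :=
    mul_pos p603 (by rw [Dbr_cyc]; exact p456)
  rw [Dbr_cyc (v 2) (v 0) (v 1)] at h2'
  rw [Dbr_cyc (v 1) (v 6) (v 0)] at h1'
  rw [Dbr_cyc (v 1) (v 6) (v 0)] at p160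
  rw [← Dbr_cyc (v 4) (v 6) (v 0), Dbr_cyc (v 6) (v 3) (v 5), Dbr_cyc (v 6) (v 0) (v 5)] at k2
  exact chain_contra p012 p356 p056 p123 p460 p160 p501
    h0 h1' h2' k1 (by linarith)

lemma no_LLL {v : Fin 7 → Fin 3 → ℝ} (h : Cvx v) (h0 : LF v) (h1 : LF (shv v 6))
    (h2 : LF (shv v 5)) : False := by
  have h1' : Dbr (v 6) (v 4) (v 5) * Dbr (v 3) (v 0) (v 1)
      < Dbr (v 6) (v 0) (v 1) * Dbr (v 3) (v 4) (v 5) := h1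
  have h2' : Dbr (v 5) (v 3) (v 4) * Dbr (v 2) (v 6) (v 0)
      < Dbr (v 5) (v 6) (v 0) * Dbr (v 2) (v 3) (v 4) := h2
  unfold LF at h0
  have p056 := h 0 5 (by decide) (by decide)
  have p412 := h 4 1 (by decide) (by decide)
  have p012 := h 0 1 (by decide) (by decide)
  have p456 := h 4 5 (by decide) (by decide)
  have p301 := h 3 0 (by decide) (by decide)
  have p601 := h 6 0 (by decide) (by decide)
  have p345 := h 3 4 (by decide) (by decide)
  have p260 := h 2 6 (by decide) (by decide)
  have p234 := h 2 3 (by decide) (by decide)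
  have p134 := h 1 3 (by decide) (by decide)
  have p401 := h 4 0 (by decide) (by decide)
  simp only [Fin.isValue, Fin.reduceAdd] at p056 p412 p012 p456 p301 p601 p345 p260 p234 p134 p401
  have k1 : Dbr (v 6) (v 0) (v 1) * Dbr (v 2) (v 3) (v 4)
      < Dbr (v 1) (v 3) (v 4) * Dbr (v 2) (v 6) (v 0) := hept_slope (h.shv 3)
  have k2 := Dbr_pl (v 1) (v 2) (v 3) (v 4) (v 0)
  have k3 : 0 < Dbr (v 1) (v 2) (v 3) * Dbr (v 1) (v 4) (v 0) :=
    mul_pos (h 1 2 (by decide) (by decide)) (by rw [Dbr_cyc]; exact p401)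
  rw [Dbr_cyc (v 6) (v 4) (v 5)] at h1'
  rw [Dbr_cyc (v 5) (v 3) (v 4), ← Dbr_cyc (v 0) (v 5) (v 6)] at h2'
  rw [← Dbr_cyc (v 4) (v 1) (v 2), ← Dbr_cyc (v 0) (v 1) (v 2), ← Dbr_cyc (v 0) (v 1) (v 3),
    ← Dbr_cyc (v 3) (v 0) (v 1)] at k2
  exact chain_contra (y := Dbr (v 1) (v 3) (v 4)) p056 p412 p012 p456 p301 p601 p260
    h0 h1' h2' (by linarith) (by linarith)

/-- Some rotation is free of failures. -/
lemma exists_good {v : Fin 7 → Fin 3 → ℝ} (h : Cvx v) :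
    ∃ r, ¬ RF (shv v r) ∧ ¬ LF (shv v r) := by
  by_contra hc
  have hb : ∀ r, RF (shv v r) ∨ LF (shv v r) := by
    intro r
    by_contra h'
    exact hc ⟨r, fun a => h' (Or.inl a), fun a => h' (Or.inr a)⟩
  have hss : ∀ r s, shv (shv v r) s = shv v (s + r) := by
    intro r s; funext k; simp [shv, add_assoc]
  have step : ∀ r, RF (shv v r) → RF (shv v (3 + r)) := by
    intro r hr
    have := no_RL (h.shv r) hr
    rw [hss] at this
    exact (hb _).resolve_right this
  by_cases hR : ∃ r, RF (shv v r)
  · obtain ⟨r, hr⟩ := hR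
    have h3 := step _ hr
    have h6 := step _ h3
    have h2 := step _ h6
    have h5 := step _ h2
    have h1 := step _ h5
    have e1 : (3 + (3 + (3 + (3 + (3 + r)))) : Fin 7) = 1 + r := by clear * -; revert r; decide
    have e2 : (3 + (3 + (3 + r)) : Fin 7) = 2 + r := by clear * -; revert r; decide
    rw [e1] at h1
    rw [e2] at h2
    exact no_RRR (h.shv r) hr (by rw [hss]; exact h1) (by rw [hss]; exact h2)
  · have hL : ∀ r, LF (shv v r) := fun r => (hb r).resolve_left fun a => hR ⟨r, a⟩
    exact no_LLL (h.shv 0) (hL 0) (by rw [hss]; exact hL _) (by rw [hss]; exact hL _)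

lemma cond_a {v : Fin 7 → Fin 3 → ℝ} (h : Cvx v) :
    Dbr (v 0) (v 2) (v 3) * Dbr (v 4) (v 5) (v 6)
      < Dbr (v 0) (v 4) (v 5) * Dbr (v 6) (v 2) (v 3) := by
  have k1 := Dbr_lt (a := v 4) (b := v 5) (c := v 6) (d := v 0) (e := v 3)
    (by rw [← Dbr_cyc]; exact h 3 4 (by decide) (by decide)) (h 4 6 (by decide) (by decide))
  have k2 := Dbr_lt (a := v 3) (b := v 4) (c := v 6) (d := v 0) (e := v 2)
    (by rw [← Dbr_cyc]; exact h 2 3 (by decide) (by decide)) (h 3 6 (by decide) (by decide))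
  rw [Dbr_cyc (v 4) (v 0) (v 3), ← Dbr_cyc (v 0) (v 4) (v 5), ← Dbr_cyc (v 3) (v 4) (v 6)] at k1
  rw [Dbr_cyc (v 3) (v 0) (v 2), ← Dbr_cyc (v 0) (v 3) (v 4), Dbr_cyc (v 3) (v 6) (v 2)] at k2
  exact ratio_trans (c := Dbr (v 0) (v 3) (v 4)) (d := Dbr (v 3) (v 4) (v 6))
    (h 4 5 (by decide) (by decide))
    (by rw [← Dbr_cyc]; exact h 6 3 (by decide) (by decide)) (h 6 2 (by decide) (by decide))
    (by linarith) (by linarith)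

lemma cond_b {v : Fin 7 → Fin 3 → ℝ} (h : Cvx v) :
    Dbr (v 0) (v 4) (v 5) * Dbr (v 1) (v 2) (v 3)
      < Dbr (v 0) (v 2) (v 3) * Dbr (v 1) (v 4) (v 5) := by
  have k1 := Dbr_lt (a := v 4) (b := v 5) (c := v 0) (d := v 1) (e := v 3)
    (by rw [← Dbr_cyc]; exact h 3 4 (by decide) (by decide)) (h 4 0 (by decide) (by decide))
  have k2 := Dbr_lt (a := v 3) (b := v 4) (c := v 0) (d := v 1) (e := v 2)
    (by rw [← Dbr_cyc]; exact h 2 3 (by decide) (by decide)) (h 3 0 (by decide) (by decide))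
  rw [← Dbr_cyc (v 0) (v 4) (v 5), Dbr_cyc (v 4) (v 1) (v 3), ← Dbr_cyc (v 1) (v 4) (v 5),
    Dbr_cyc (v 4) (v 0) (v 3)] at k1
  rw [← Dbr_cyc (v 0) (v 3) (v 4), Dbr_cyc (v 3) (v 1) (v 2), ← Dbr_cyc (v 1) (v 3) (v 4),
    Dbr_cyc (v 3) (v 0) (v 2)] at k2
  exact ratio_trans (c := Dbr (v 0) (v 3) (v 4)) (d := Dbr (v 1) (v 3) (v 4))
    (h 1 2 (by decide) (by decide)) (h 1 3 (by decide) (by decide))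
    (h 1 4 (by decide) (by decide))
    (by linarith) (by linarith)

/-- The explicit factorization, at the level of slack matrices. -/
lemma factor (S : Fin 7 → Fin 7 → ℝ) (l1 l2 l3 l4 l5 l6 : ℝ)
    (hl1 : 0 < l1) (hl2 : 0 < l2) (hl3 : 0 < l3) (hl4 : 0 < l4) (hl5 : 0 < l5) (hl6 : 0 < l6)
    (hz1 : ∀ j, S j j = 0) (hz2 : ∀ j, S (j + 1) j = 0) (hS : ∀ i j, 0 ≤ S i j)
    (E1 : ∀ j, S 0 j - l1 * S 1 j + l2 * S 2 j - l3 * S 3 j = 0)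
    (E2 : ∀ j, S 0 j - l6 * S 6 j + l5 * S 5 j - l4 * S 4 j = 0)
    (c1 : S 0 1 ≤ l4 * S 4 1) (c2 : S 0 2 ≤ l6 * S 6 2)
    (c3 : S 0 5 ≤ l3 * S 3 5) (c4 : S 0 4 ≤ l1 * S 1 4) :
    ∃ (B : Fin 7 → Fin 6 → ℝ) (C : Fin 6 → Fin 7 → ℝ),
      (∀ i j, 0 ≤ B i j) ∧ (∀ i j, 0 ≤ C i j) ∧ ∀ i j, S i j = ∑ k, B i k * C k j := by
  let t : Fin 7 → ℝ := ![0, 0, S 0 2, S 0 3, S 0 4, 0, 0]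
  refine ⟨![![0, 1, 0, 0, 1, 0], ![0, l1⁻¹, 0, l1⁻¹, 0, 0], ![l2⁻¹, 0, 0, l2⁻¹, 0, 0],
    ![l3⁻¹, 0, 0, 0, l3⁻¹, 0], ![0, 0, l4⁻¹, 0, l4⁻¹, 0], ![0, 0, l5⁻¹, 0, 0, l5⁻¹],
    ![0, l6⁻¹, 0, 0, 0, l6⁻¹]],
    ![fun j => l3 * S 3 j - S 0 j + t j, t, fun j => l4 * S 4 j - S 0 j + t j,
      fun j => l1 * S 1 j - t j, fun j => S 0 j - t j, fun j => l6 * S 6 j - t j], ?_, ?_, ?_⟩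
  · intro i j
    fin_cases i <;> fin_cases j <;> simp <;> positivity
  · intro i j
    have z1 := hz1 j
    have z2 := hz2 j
    have e1 := E1 j
    have e2 := E2 j
    have q0 := hS 0 j
    have q1 := mul_nonneg hl1.le (hS 1 j)
    have q2 := mul_nonneg hl2.le (hS 2 j)
    have q3 := mul_nonneg hl3.le (hS 3 j)
    have q4 := mul_nonneg hl4.le (hS 4 j)
    have q5 := mul_nonneg hl5.le (hS 5 j)
    have q6 := mul_nonneg hl6.le (hS 6 j)
    fin_cases j <;> simp at z1 z2 e1 e2 q0 q1 q2 q3 q4 q5 q6 <;>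
      simp [z1, z2] at e1 e2 <;> fin_cases i <;> simp [t] <;> linarith
  · intro i j
    have e1 := E1 j
    have e2 := E2 j
    fin_cases i <;> simp [Fin.sum_univ_succ] <;> field_simp <;> linarith

lemma factor_of_good {v : Fin 7 → Fin 3 → ℝ} (h : Cvx v) (hR : ¬ RF v) (hL : ¬ LF v) :
    ∃ (B : Fin 7 → Fin 6 → ℝ) (C : Fin 6 → Fin 7 → ℝ),
      (∀ i j, 0 ≤ B i j) ∧ (∀ i j, 0 ≤ C i j) ∧
      ∀ i j, Dbr (v i) (v j) (v (j + 1)) = ∑ k, B i k * C k j := by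
  have p123 : 0 < Dbr (v 1) (v 2) (v 3) := h 1 2 (by decide) (by decide)
  have p023 : 0 < Dbr (v 0) (v 2) (v 3) := h 0 2 (by decide) (by decide)
  have p013 : 0 < Dbr (v 0) (v 1) (v 3) := by
    rw [← Dbr_cyc]; exact h 3 0 (by decide) (by decide)
  have p012 : 0 < Dbr (v 0) (v 1) (v 2) := h 0 1 (by decide) (by decide)
  have p456 : 0 < Dbr (v 4) (v 5) (v 6) := h 4 5 (by decide) (by decide)
  have p045 : 0 < Dbr (v 0) (v 4) (v 5) := h 0 4 (by decide) (by decide)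
  have p046 : 0 < Dbr (v 0) (v 4) (v 6) := by
    rw [Dbr_cyc]; exact h 4 6 (by decide) (by decide)
  have p056 : 0 < Dbr (v 0) (v 5) (v 6) := h 0 5 (by decide) (by decide)
  have ca := cond_a h
  have cb := cond_b h
  unfold RF at hR
  unfold LF at hL
  push Not at hR hL
  have z1 : ∀ j, Dbr (v j) (v j) (v (j + 1)) = 0 := by intro j; unfold Dbr; ring
  have z2 : ∀ j, Dbr (v (j + 1)) (v j) (v (j + 1)) = 0 := by intro j; unfold Dbr; ring
  refine factor (fun i j => Dbr (v i) (v j) (v (j + 1)))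
    (Dbr (v 0) (v 2) (v 3) / Dbr (v 1) (v 2) (v 3))
    (Dbr (v 0) (v 1) (v 3) / Dbr (v 1) (v 2) (v 3))
    (Dbr (v 0) (v 1) (v 2) / Dbr (v 1) (v 2) (v 3))
    (Dbr (v 0) (v 5) (v 6) / Dbr (v 4) (v 5) (v 6))
    (Dbr (v 0) (v 4) (v 6) / Dbr (v 4) (v 5) (v 6))
    (Dbr (v 0) (v 4) (v 5) / Dbr (v 4) (v 5) (v 6))
    (by positivity) (by positivity) (by positivity) (by positivity) (by positivity)
    (by positivity) z1 z2 ?_ ?_ ?_ ?_ ?_ ?_ ?_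
  · intro i j
    by_cases h1 : i = j
    · subst h1; exact (z1 i).ge
    · by_cases h2 : i = j + 1
      · subst h2; exact (z2 j).ge
      · exact (h i j h1 h2).le
  · intro j
    have := Dbr_dep (v 0) (v 1) (v 2) (v 3) (v j) (v (j + 1))
    field_simp
    linarith
  · intro j
    have := Dbr_dep (v 0) (v 4) (v 5) (v 6) (v j) (v (j + 1))
    field_simp
    linarith
  all_goals
    simp only [Fin.isValue, Fin.reduceAdd]
    rw [div_mul_eq_mul_div, le_div_iff₀ (by assumption)]
    linarith

/-- If `V = 𝒱(a₁,a₂,a₃,b₁,b₂,b₃)` has positive entries off the pattern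
`i ∈ {j-1, j}`, then `V` has nonnegative rank strictly less than 7. -/
theorem Vmat_nonneg_rank_lt_seven (a₁ a₂ a₃ b₁ b₂ b₃ : ℝ)
    (hpos : ∀ i j : ZMod 7, i ≠ j - 1 → i ≠ j → 0 < Vmat a₁ a₂ a₃ b₁ b₂ b₃ i j) :
    ∃ (B : Matrix (ZMod 7) (Fin 6) ℝ) (C : Matrix (Fin 6) (ZMod 7) ℝ),
      (∀ i j, 0 ≤ B i j) ∧ (∀ i j, 0 ≤ C i j) ∧
      Vmat a₁ a₂ a₃ b₁ b₂ b₃ = B * C := by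
  let w : Fin 7 → Fin 3 → ℝ := Wrow a₁ a₂ a₃ b₁ b₂ b₃
  have hV : ∀ i j : Fin 7, Vmat a₁ a₂ a₃ b₁ b₂ b₃ i j
      = Dbr (w (i - 1)) (w (j - 2)) (w (j - 1)) := by
    intro i j
    have := Matrix.det_fin_three (Matrix.of ![w (i - 1), w (j - 2), w (j - 1)])
    exact this
  have hw : Cvx w := by
    intro k l h1 h2
    have := hpos (k + 1 : Fin 7) (l + 2 : Fin 7)
      (show (k + 1 : Fin 7) ≠ l + 2 - 1 by revert k l; decide)
      (show (k + 1 : Fin 7) ≠ l + 2 by revert k l; decide)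
    rw [hV] at this
    have e1 : (k + 1 - 1 : Fin 7) = k := by clear * -; revert k; decide
    have e2 : (l + 2 - 2 : Fin 7) = l := by clear * -; revert l; decide
    have e3 : (l + 2 - 1 : Fin 7) = l + 1 := by clear * -; revert l; decide
    rwa [e1, e2, e3] at this
  obtain ⟨r, hR, hL⟩ := exists_good hw
  obtain ⟨B, C, hB, hC, hBC⟩ := factor_of_good (hw.shv r) hR hL
  refine ⟨fun i k => B ((show Fin 7 from i) - 1 - r) k, fun k j => C k ((show Fin 7 from j) - 2 - r),
    fun i j => hB _ _, fun i j => hC _ _, ?_⟩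
  have key : ∀ i j : Fin 7, Vmat a₁ a₂ a₃ b₁ b₂ b₃ i j
      = ∑ k, B (i - 1 - r) k * C k (j - 2 - r) := by
    intro i j
    rw [hV, ← hBC]
    have e1 : (i - 1 - r + r : Fin 7) = i - 1 := by clear * -; revert i r; decide
    have e2 : (j - 2 - r + r : Fin 7) = j - 2 := by clear * -; revert j r; decide
    have e3 : (j - 2 - r + 1 + r : Fin 7) = j - 1 := by clear * -; revert j r; decide
    simp only [shv, e1, e2, e3]
  ext i j
  exact key i j
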